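/- Let f : (0,δ₀) → ℝ be defined by f(s) = A_su(x) - u(x) for a subharmonic function u on Ω and a fixed x ∈ Ω_{δ₀}, where A_s denotes the spherical mean over the sphere of radius s. Then f is nonnegative and nondecreasing on (0,δ₀). -/

import Mathlib

open MeasureTheory Metric Set Filter

noncomputable section

/-- Subharmonicity via the sub-mean value property over closed balls. -/
def SubharmonicOn {n : ℕ} (u : EuclideanSpace ℝ (Fin n) → ℝ)
    (Ω : Set (EuclideanSpace ℝ (Fin n))) : Prop :=
  UpperSemicontinuousOn u Ω ∧ LocallyIntegrableOn u Ω ∧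
    ∀ x r, 0 < r → closedBall x r ⊆ Ω → u x ≤ ⨍ y in closedBall x r, u y

/-- The surface measure on the unit sphere of `ℝⁿ`. -/
def sphereMeasure (n : ℕ) : Measure (sphere (0 : EuclideanSpace ℝ (Fin n)) 1) :=
  (volume : Measure (EuclideanSpace ℝ (Fin n))).toSphere

/-- Total area `σ_{n-1}` of the unit sphere of `ℝⁿ`. -/
def sphereArea (n : ℕ) : ℝ := ((sphereMeasure n) univ).toReal

/-- Spherical mean `A_s u (x)` of `u` over the sphere of radius `s` centered at `x`. -/
def sphericalMean {n : ℕ} (u : EuclideanSpace ℝ (Fin n) → ℝ)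
    (x : EuclideanSpace ℝ (Fin n)) (s : ℝ) : ℝ :=
  (sphereArea n)⁻¹ * ∫ ξ, u (x + s • (ξ : EuclideanSpace ℝ (Fin n))) ∂(sphereMeasure n)

/-- Volume mean `Λ_δ u (x)` of `u` over the ball of radius `δ` centered at `x`. -/
def volumeMean {n : ℕ} (u : EuclideanSpace ℝ (Fin n) → ℝ)
    (x : EuclideanSpace ℝ (Fin n)) (δ : ℝ) : ℝ :=
  ⨍ y in ball x δ, u y

/-- Max characteristic `M_δ u (x) = max_{|y-x| ≤ δ} u (y)`. -/
def maxBall {n : ℕ} (u : EuclideanSpace ℝ (Fin n) → ℝ)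
    (x : EuclideanSpace ℝ (Fin n)) (δ : ℝ) : ℝ :=
  sSup (u '' closedBall x δ)

/-- Oscillation of `u` on a set. -/
def oscOn {n : ℕ} (u : EuclideanSpace ℝ (Fin n) → ℝ)
    (s : Set (EuclideanSpace ℝ (Fin n))) : ℝ :=
  sSup (u '' s) - sInf (u '' s)

/-- `Ω_δ = {x ∈ Ω : dist(x, ∂Ω) > δ}`. -/
def shrink {n : ℕ} (Ω : Set (EuclideanSpace ℝ (Fin n))) (δ : ℝ) :
    Set (EuclideanSpace ℝ (Fin n)) :=
  {x ∈ Ω | δ < Metric.infDist x Ωᶜ}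

/-- Regularization `R_δ u (x)` by a radial kernel `ρ` (given as a function of the radius). -/
def radialReg {n : ℕ} (ρ : ℝ → ℝ) (u : EuclideanSpace ℝ (Fin n) → ℝ)
    (x : EuclideanSpace ℝ (Fin n)) (δ : ℝ) : ℝ :=
  ∫ ξ in ball (0 : EuclideanSpace ℝ (Fin n)) 1, u (x + δ • ξ) * ρ ‖ξ‖

/-- A modulus of continuity: continuous, increasing, subadditive, vanishing at `0`. -/
structure ModulusOfContinuity (κ : ℝ → ℝ) : Prop where
  continuous : ContinuousOn κ (Ici 0)
  mono : ∀ s t, 0 ≤ s → s ≤ t → κ s ≤ κ t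
  subadd : ∀ s t, 0 ≤ s → 0 ≤ t → κ (s + t) ≤ κ s + κ t
  zero : κ 0 = 0
  nonneg : ∀ t, 0 ≤ t → 0 ≤ κ t

end

open scoped ENNReal Topology

section aux

variable {n : ℕ}

local notation "EE" => EuclideanSpace ℝ (Fin n)

lemma aux_polar (hpos : 1 ≤ n) (f : EE → ℝ≥0∞) (hf : Measurable f) :
    ∫⁻ z, f z = ∫⁻ ρ : Ioi (0 : ℝ), ∫⁻ ξ, f ((ρ : ℝ) • (ξ : EE)) ∂(sphereMeasure n)
      ∂(Measure.volumeIoiPow (Module.finrank ℝ EE - 1)) := by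
  have : Nontrivial EE := by
    have : Nonempty (Fin n) := ⟨⟨0, hpos⟩⟩
    infer_instance
  have hmp := (volume : Measure EE).measurePreserving_homeomorphUnitSphereProd
  have h1 : ∫⁻ z, f z = ∫⁻ z : ({(0)}ᶜ : Set EE), f z ∂(Measure.comap Subtype.val volume) := by
    rw [lintegral_subtype_comap (measurableSet_singleton _).compl f,
      restrict_compl_singleton]
  have h2 : Measurable fun p : sphere (0 : EE) 1 × Ioi (0 : ℝ) => f ((p.2 : ℝ) • (p.1 : EE)) := by
    apply hf.comp
    fun_prop
  rw [h1]
  have h3 := hmp.lintegral_comp h2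
  rw [lintegral_prod_symm' _ h2] at h3
  unfold sphereMeasure
  rw [← h3]
  apply lintegral_congr
  intro z
  congr 1
  have hz : ‖(z : EE)‖ ≠ 0 := norm_ne_zero_iff.2 z.2
  simp [smul_smul, hz]

lemma aux_rot (L : EE ≃ₗᵢ[ℝ] EE) (z : EE) (s r : ℝ) :
    sphereMeasure n {ξ | ‖L z - s • (ξ : EE)‖ ≤ r} = sphereMeasure n {ξ | ‖z - s • (ξ : EE)‖ ≤ r} := by
  have hm : ∀ w : EE, MeasurableSet {ξ : sphere (0 : EE) 1 | ‖w - s • (ξ : EE)‖ ≤ r} := fun w =>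
    measurableSet_le (by fun_prop) (by fun_prop)
  unfold sphereMeasure
  rw [Measure.toSphere_apply' _ (hm _), Measure.toSphere_apply' _ (hm _)]
  congr 1
  rw [← L.measurePreserving.measure_preimage_equiv (f := L.toMeasurableEquiv)]
  congr 1
  ext y
  simp only [mem_preimage, Set.mem_smul, mem_image, mem_ofPred_eq]
  constructor
  · rintro ⟨a, ha, _, ⟨ξ, hξ, rfl⟩, h⟩
    refine ⟨a, ha, _, ⟨⟨L.symm ξ, by simp⟩, ?_, rfl⟩, ?_⟩
    · rw [← L.norm_map]; simpa using hξ
    · apply L.injective; simpa using h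
  · rintro ⟨a, ha, _, ⟨ξ, hξ, rfl⟩, h⟩
    refine ⟨a, ha, _, ⟨⟨L ξ, by simp⟩, ?_, rfl⟩, ?_⟩
    · rw [← L.norm_map] at hξ; simpa using hξ
    · subst h; simp

lemma aux_rad (z w : EE) (hzw : ‖z‖ = ‖w‖) (s r : ℝ) :
    sphereMeasure n {ξ | ‖z - s • (ξ : EE)‖ ≤ r} = sphereMeasure n {ξ | ‖w - s • (ξ : EE)‖ ≤ r} := by
  rw [← Submodule.reflection_sub hzw]
  exact (aux_rot _ _ _ _).symm

instance : IsFiniteMeasure (sphereMeasure n) := by unfold sphereMeasure; infer_instance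

lemma aux_radial_int (hn : 1 ≤ n) (K h : EE → ℝ≥0∞) (hK : Measurable K) (hh : Measurable h)
    (hrad : ∀ z w, ‖z‖ = ‖w‖ → K z = K w) :
    ∫⁻ z, K z * (∫⁻ ξ, h (‖z‖ • (ξ : EE)) ∂(sphereMeasure n)) =
      sphereMeasure n univ * ∫⁻ z, K z * h z := by
  have hmeas : Measurable fun ρ : ℝ => ∫⁻ ξ, h (ρ • (ξ : EE)) ∂(sphereMeasure n) := by
    apply Measurable.lintegral_prod_right'
      (f := fun p : ℝ × sphere (0 : EE) 1 => h (p.1 • (p.2 : EE)))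
    exact hh.comp (by fun_prop)
  have hm2 : Measurable fun z : EE => K z * (∫⁻ ξ, h (‖z‖ • (ξ : EE)) ∂(sphereMeasure n)) :=
    hK.mul (hmeas.comp measurable_norm)
  have hm3 : Measurable fun z : EE => K z * h z := hK.mul hh
  rw [aux_polar hn _ hm2, aux_polar hn _ hm3,
    ← lintegral_const_mul']
  swap
  · exact measure_ne_top _ _
  apply lintegral_congr
  intro ρ
  have hρ : (0 : ℝ) < ρ := ρ.2
  let e : EE := EuclideanSpace.single ⟨0, hn⟩ 1
  have hK' : ∀ ξ : sphere (0 : EE) 1, K ((ρ : ℝ) • (ξ : EE)) = K ((ρ : ℝ) • e) := fun ξ => by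
    apply hrad
    simp [norm_smul, e]
  have hnorm : ∀ ξ : sphere (0 : EE) 1, ‖(ρ : ℝ) • (ξ : EE)‖ = ρ := fun ξ => by
    simp [norm_smul, abs_of_pos hρ]
  simp only [hK', hnorm]
  rw [lintegral_const, lintegral_const_mul]
  · ring
  · exact hh.comp (by fun_prop)

lemma aux_lsc (h : EE → ℝ≥0∞) (hh : LowerSemicontinuous h) :
    LowerSemicontinuous fun ρ : ℝ => ∫⁻ ξ, h (ρ • (ξ : EE)) ∂(sphereMeasure n) := by
  rw [lowerSemicontinuous_iff_le_liminf]
  intro ρ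
  refine le_trans ?_ (lintegral_liminf_le (u := 𝓝 ρ) fun ρ => hh.measurable.comp (by fun_prop))
  apply lintegral_mono
  intro ξ
  have hc : Continuous fun ρ : ℝ => ρ • (ξ : EE) := by fun_prop
  exact lowerSemicontinuous_iff_le_liminf.1 (hh.comp hc) ρ

lemma aux_main (hn : 1 ≤ n) (h : EE → ℝ≥0∞) (hh : LowerSemicontinuous h) (R : ℝ)
    (hsup : ∀ y r, 0 < r → closedBall y r ⊆ ball 0 R →
      ∫⁻ z in closedBall y r, h z ≤ volume (closedBall y r) * h y)
    (h0 : h 0 ≠ ∞) (s t : ℝ) (hs : 0 ≤ s) (hst : s ≤ t) (htR : t < R) :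
    ∫⁻ ξ, h (t • (ξ : EE)) ∂(sphereMeasure n) ≤ ∫⁻ ξ, h (s • (ξ : EE)) ∂(sphereMeasure n) := by
  have : Nonempty (Fin n) := ⟨⟨0, hn⟩⟩
  have : Nontrivial EE := inferInstance
  have hσ0 : sphereMeasure n ≠ 0 := by unfold sphereMeasure; exact Measure.toSphere_ne_zero _
  set G : ℝ → ℝ≥0∞ := fun ρ => ∫⁻ ξ, h (ρ • (ξ : EE)) ∂(sphereMeasure n) with hG
  have hlsc : LowerSemicontinuous G := aux_lsc h hh
  change G t ≤ G s
  obtain ⟨ρ₁, hρ₁, hmin⟩ := (hlsc.lowerSemicontinuousOn (Icc 0 t)).exists_isMinOn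
    ⟨0, by simp; linarith⟩ isCompact_Icc
  have hmin' : ∀ ρ, 0 ≤ ρ → ρ ≤ t → G ρ₁ ≤ G ρ := fun ρ h1 h2 => hmin ⟨h1, h2⟩
  have hmfin : G ρ₁ ≠ ∞ := by
    refine ne_top_of_le_ne_top ?_ (hmin' 0 le_rfl (by linarith))
    simp only [hG, zero_smul, lintegral_const]
    exact ENNReal.mul_ne_top h0 (measure_ne_top _ _)
  have hcl : IsClosed (G ⁻¹' Iic (G ρ₁)) := hlsc.isClosed_preimage _
  obtain ⟨ρ₀, ⟨hρ₀, hρ₀m⟩, hgr⟩ := (isCompact_Icc.inter_right hcl : IsCompact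
    (Icc 0 t ∩ G ⁻¹' Iic (G ρ₁))).exists_isGreatest ⟨ρ₁, hρ₁, by simp⟩
  have hρ₀m' : G ρ₀ ≤ G ρ₁ := hρ₀m
  rcases eq_or_lt_of_le hρ₀.2 with heq | hlt
  · rw [← heq]; exact hρ₀m'.trans (hmin' s hs hst)
  exfalso
  set m := G ρ₁ with hm
  have hstrict : ∀ ρ, ρ₀ < ρ → ρ ≤ t → m < G ρ := fun ρ h1 h2 => by
    by_contra hcon
    have := hgr ⟨⟨by linarith [hρ₀.1], h2⟩, not_lt.1 hcon⟩
    linarith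
  set r := t - ρ₀ with hr
  have hrpos : 0 < r := by linarith
  have hGm : Measurable G := hlsc.measurable
  have hsph : ∀ ξ : sphere (0 : EE) 1, ‖ρ₀ • (ξ : EE)‖ = ρ₀ := fun ξ => by
    simp [norm_smul, abs_of_nonneg hρ₀.1]
  have hballt : ∀ ξ : sphere (0 : EE) 1, ∀ z ∈ closedBall (ρ₀ • (ξ : EE)) r, ‖z‖ ≤ t := by
    intro ξ z hz
    have h1 : ‖z - ρ₀ • (ξ : EE)‖ ≤ r := by simpa [dist_eq_norm] using hz
    have h2 := norm_sub_norm_le z (ρ₀ • (ξ : EE))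
    rw [hsph] at h2
    linarith
  set V := volume (closedBall (0 : EE) r) with hV
  have hVeq : ∀ y : EE, volume (closedBall y r) = V := fun y => by
    rw [hV, EuclideanSpace.volume_closedBall, EuclideanSpace.volume_closedBall]
  have hVfin : V ≠ ∞ := measure_closedBall_lt_top.ne
  -- strict inequality on each ball
  have hI : ∀ ξ : sphere (0 : EE) 1,
      V * m < ∫⁻ z in closedBall (ρ₀ • (ξ : EE)) r, G ‖z‖ := by
    intro ξ
    rw [← hVeq (ρ₀ • (ξ : EE)), mul_comm, ← setLIntegral_const]
    by_contra hcon
    have hae := ae_eq_of_ae_le_of_lintegral_le (μ := volume.restrict (closedBall (ρ₀ • (ξ : EE)) r))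
      (f := fun _ => m) (g := fun z => G ‖z‖) ?_ ?_ ?_ (not_lt.1 hcon)
    · rw [EventuallyEq, ae_restrict_iff' measurableSet_closedBall] at hae
      set U : Set EE := ball (ρ₀ • (ξ : EE)) r ∩ {z | ρ₀ < ‖z‖}
      have hU : IsOpen U := isOpen_ball.inter (isOpen_lt continuous_const continuous_norm)
      have hUne : U.Nonempty := by
        refine ⟨(ρ₀ + r / 2) • (ξ : EE), ?_, ?_⟩
        · have : (ρ₀ + r / 2) • (ξ : EE) - ρ₀ • (ξ : EE) = (r / 2) • (ξ : EE) := by module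
          rw [mem_ball, dist_eq_norm, this, norm_smul]
          simp [abs_of_pos hrpos]; linarith
        · have h1 := hρ₀.1
          simp only [mem_ofPred_eq, norm_smul, norm_eq_of_mem_sphere, Real.norm_eq_abs]
          rw [abs_of_nonneg (by linarith)]; linarith
      apply (hU.measure_pos volume hUne).ne'
      refine measure_mono_null ?_ hae
      intro z hz hz'
      have hzb := ball_subset_closedBall hz.1
      have := hz' hzb
      exact (hstrict _ hz.2 (hballt ξ z hzb)).ne this
    · rw [EventuallyLE, ae_restrict_iff' measurableSet_closedBall]
      exact ae_of_all _ fun z hz => hmin' _ (norm_nonneg z) (hballt ξ z hz)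
    · rw [setLIntegral_const, hVeq]; exact ENNReal.mul_ne_top hmfin hVfin
    · exact (hGm.comp measurable_norm).aemeasurable
  -- the kernel
  let B : Set (sphere (0 : EE) 1 × EE) := {p | ‖p.2 - ρ₀ • (p.1 : EE)‖ ≤ r}
  have hB : MeasurableSet B := measurableSet_le (by fun_prop) (by fun_prop)
  let K : EE → ℝ≥0∞ := fun z => sphereMeasure n {ξ | ‖z - ρ₀ • (ξ : EE)‖ ≤ r}
  have hKm : Measurable K := measurable_measure_prodMk_right hB
  have hswap : ∀ f : EE → ℝ≥0∞, Measurable f →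
      ∫⁻ ξ, (∫⁻ z in closedBall (ρ₀ • (ξ : EE)) r, f z) ∂(sphereMeasure n) = ∫⁻ z, K z * f z := by
    intro f hf
    have e1 : ∀ ξ : sphere (0 : EE) 1, ∫⁻ z in closedBall (ρ₀ • (ξ : EE)) r, f z =
        ∫⁻ z, B.indicator (fun p => f p.2) (ξ, z) := by
      intro ξ
      rw [← lintegral_indicator measurableSet_closedBall]
      apply lintegral_congr
      intro z
      simp [indicator, B, dist_eq_norm]
    simp_rw [e1]
    rw [lintegral_lintegral_swap]
    · apply lintegral_congr
      intro z
      have : ∀ ξ : sphere (0 : EE) 1, B.indicator (fun p => f p.2) (ξ, z) =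
          {ξ : sphere (0 : EE) 1 | ‖z - ρ₀ • (ξ : EE)‖ ≤ r}.indicator (fun _ => f z) ξ := by
        intro ξ; simp [indicator, B]
      simp_rw [this]
      rw [lintegral_indicator_const, mul_comm]
      exact measurableSet_le (by fun_prop) (by fun_prop)
    · exact ((hf.comp measurable_snd).indicator hB).aemeasurable
  have hkey := aux_radial_int hn K h hKm hh.measurable fun z w hzw => aux_rad z w hzw ρ₀ r
  have hlow : ∫⁻ ξ : sphere (0 : EE) 1, V * m ∂(sphereMeasure n) <
      ∫⁻ ξ, (∫⁻ z in closedBall (ρ₀ • (ξ : EE)) r, G ‖z‖) ∂(sphereMeasure n) := by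
    apply lintegral_strict_mono hσ0
    · have : Measurable fun ξ : sphere (0 : EE) 1 => ∫⁻ z, B.indicator (fun p => G ‖p.2‖) (ξ, z) :=
        Measurable.lintegral_prod_right
          ((hGm.comp (measurable_norm.comp measurable_snd)).indicator hB)
      refine Measurable.aemeasurable ?_
      convert this using 2 with ξ
      rw [← lintegral_indicator measurableSet_closedBall]
      apply lintegral_congr
      intro z
      simp [indicator, B, dist_eq_norm]
    · rw [lintegral_const]
      exact ENNReal.mul_ne_top (ENNReal.mul_ne_top hVfin hmfin) (measure_ne_top _ _)
    · exact ae_of_all _ hI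
  rw [hswap (fun z => G ‖z‖) (hGm.comp measurable_norm)] at hlow
  have hup : ∫⁻ z, K z * h z ≤ V * m := by
    rw [← hswap _ hh.measurable]
    calc _ ≤ ∫⁻ ξ : sphere (0 : EE) 1, V * h (ρ₀ • (ξ : EE)) ∂(sphereMeasure n) := by
          apply lintegral_mono
          intro ξ
          have := hsup (ρ₀ • (ξ : EE)) r hrpos ?_
          · rwa [hVeq] at this
          · intro z hz
            have := hballt ξ z hz
            rw [mem_ball_zero_iff]; linarith
      _ = V * G ρ₀ := lintegral_const_mul' _ _ hVfin
      _ ≤ V * m := by gcongr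
  rw [lintegral_const] at hlow
  apply hlow.not_ge
  change ∫⁻ z, K z * (∫⁻ ξ, h (‖z‖ • (ξ : EE)) ∂(sphereMeasure n)) ≤ _
  rw [hkey, mul_comm]
  gcongr

end aux

theorem stmt7 (n : ℕ) (hn : 1 ≤ n) (Ω : Set (EuclideanSpace ℝ (Fin n)))
    (hΩo : IsOpen Ω) (u : EuclideanSpace ℝ (Fin n) → ℝ) (hu : SubharmonicOn u Ω)
    (δ₀ : ℝ) (hδ₀ : 0 < δ₀) (x : EuclideanSpace ℝ (Fin n)) (hx : x ∈ shrink Ω δ₀) :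
    (∀ s, 0 < s → s < δ₀ → 0 ≤ sphericalMean u x s - u x) ∧
      ∀ s t, 0 < s → s ≤ t → t < δ₀ →
        sphericalMean u x s - u x ≤ sphericalMean u x t - u x := by
  obtain ⟨husc, hloc, hmv⟩ := hu
  have hsub : closedBall x δ₀ ⊆ Ω := by
    intro y hy
    by_contra hcon
    have := infDist_le_dist_of_mem (x := x) (s := Ωᶜ) hcon
    rw [dist_comm] at this
    have h2 := hx.2
    rw [mem_closedBall] at hy
    linarith
  obtain ⟨M, hM⟩ := (husc.mono hsub).bddAbove_of_isCompact (isCompact_closedBall x δ₀)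
  have hM' : ∀ y ∈ closedBall x δ₀, u y ≤ M := fun y hy => hM ⟨y, hy, rfl⟩
  have hxadd : ∀ z, z ∈ ball (0 : EuclideanSpace ℝ (Fin n)) δ₀ ↔ x + z ∈ ball x δ₀ := by
    intro z; simp [dist_eq_norm]
  let h : EuclideanSpace ℝ (Fin n) → ℝ≥0∞ :=
    (ball 0 δ₀).indicator fun z => ENNReal.ofReal (M - u (x + z))
  have hval : ∀ z ∈ ball (0 : EuclideanSpace ℝ (Fin n)) δ₀, h z = ENNReal.ofReal (M - u (x + z)) :=
    fun z hz => indicator_of_mem hz _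
  have hlsc : LowerSemicontinuous h := by
    intro z a ha
    by_cases hz : z ∈ ball (0 : EuclideanSpace ℝ (Fin n)) δ₀
    · rw [hval z hz] at ha
      have hat : a ≠ ∞ := ne_top_of_lt ha
      have h1 : a.toReal < M - u (x + z) := by
        rwa [gt_iff_lt, ENNReal.lt_ofReal_iff_toReal_lt hat] at ha
      have h2 := husc (x + z) (hsub (ball_subset_closedBall ((hxadd z).1 hz))) (M - a.toReal) (by linarith)
      rw [(hΩo.nhdsWithin_eq (hsub (ball_subset_closedBall ((hxadd z).1 hz))))] at h2
      have hc : Continuous fun z => x + z := by fun_prop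
      have h3 := (hc.tendsto z).eventually h2
      filter_upwards [h3, isOpen_ball.mem_nhds hz] with y hy hyb
      rw [hval y hyb, gt_iff_lt, ENNReal.lt_ofReal_iff_toReal_lt hat]
      linarith
    · simp [h, hz] at ha
  have hsup : ∀ y r, 0 < r → closedBall y r ⊆ ball 0 δ₀ →
      ∫⁻ z in closedBall y r, h z ≤ volume (closedBall y r) * h y := by
    intro y r hr hyr
    have hΩ' : closedBall (x + y) r ⊆ closedBall x δ₀ := by
      intro w hw
      have : w - x ∈ closedBall y r := by
        rw [mem_closedBall, dist_eq_norm] at hw ⊢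
        convert hw using 2; abel
      have := (hxadd _).1 (hyr this)
      simpa using ball_subset_closedBall this
    have hi : IntegrableOn u (closedBall (x + y) r) :=
      hloc.integrableOn_compact_subset (hΩ'.trans hsub) (isCompact_closedBall _ _)
    have hmvy := hmv (x + y) r hr (hΩ'.trans hsub)
    have hvpos : 0 < volume (closedBall (x + y) r) := measure_closedBall_pos _ _ hr
    have hvfin : volume (closedBall (x + y) r) ≠ ∞ := measure_closedBall_lt_top.ne
    have hvr : 0 < volume.real (closedBall (x + y) r) := ENNReal.toReal_pos hvpos.ne' hvfin
    rw [hval y (hyr (mem_closedBall_self hr.le))]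
    have e1 : ∫⁻ z in closedBall y r, h z = ∫⁻ w in closedBall (x + y) r, ENNReal.ofReal (M - u w) := by
      rw [← lintegral_indicator measurableSet_closedBall, ← lintegral_indicator measurableSet_closedBall,
        ← lintegral_add_left_eq_self (μ := volume)
          ((closedBall (x + y) r).indicator _) x]
      apply lintegral_congr
      intro z
      by_cases hz : z ∈ closedBall y r
      · have hz' : x + z ∈ closedBall (x + y) r := by simpa using hz
        rw [indicator_of_mem hz, indicator_of_mem hz', hval z (hyr hz)]
      · have hz' : x + z ∉ closedBall (x + y) r := by simpa using hz
        rw [indicator_of_notMem hz, indicator_of_notMem hz']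
    have : Nonempty (Fin n) := ⟨⟨0, hn⟩⟩
    have e2 : volume (closedBall y r) = volume (closedBall (x + y) r) := by
      rw [EuclideanSpace.volume_closedBall, EuclideanSpace.volume_closedBall]
    have hci : IntegrableOn (fun _ : EuclideanSpace ℝ (Fin n) => M) (closedBall (x + y) r) :=
      integrableOn_const hvfin
    have hcs : IntegrableOn (fun w => M - u w) (closedBall (x + y) r) := hci.sub hi
    rw [e1, e2, ← ofReal_integral_eq_lintegral_ofReal hcs, integral_sub hci hi,
      ← ENNReal.ofReal_toReal hvfin, ← ENNReal.ofReal_mul ENNReal.toReal_nonneg]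
    · apply ENNReal.ofReal_le_ofReal
      rw [setAverage_eq, smul_eq_mul, ← div_eq_inv_mul, le_div_iff₀ hvr] at hmvy
      rw [setIntegral_const, smul_eq_mul]
      change _ ≤ volume.real _ * _
      nlinarith
    · rw [EventuallyLE, ae_restrict_iff' measurableSet_closedBall]
      exact ae_of_all _ fun z hz => sub_nonneg.2 (hM' z (hΩ' hz))
  have h00 : h 0 = ENNReal.ofReal (M - u x) := by
    rw [hval 0 (mem_ball_self hδ₀), add_zero]
  have hmain := aux_main hn h hlsc δ₀ hsup (by rw [h00]; exact ENNReal.ofReal_ne_top)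
  have hσ : 0 < sphereArea n := by
    have : Nonempty (Fin n) := ⟨⟨0, hn⟩⟩
    have hσ0 : sphereMeasure n ≠ 0 := by unfold sphereMeasure; exact Measure.toSphere_ne_zero _
    apply ENNReal.toReal_pos _ (measure_ne_top _ _)
    simpa using hσ0
  have hmem : ∀ s, 0 ≤ s → s < δ₀ → ∀ ξ : sphere (0 : EuclideanSpace ℝ (Fin n)) 1,
      s • (ξ : EuclideanSpace ℝ (Fin n)) ∈ ball (0 : EuclideanSpace ℝ (Fin n)) δ₀ := by
    intro s h1 h2 ξ
    simp [norm_smul, abs_of_nonneg h1, h2]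
  -- compute spherical means
  have hcomp : ∀ s, 0 ≤ s → s < δ₀ →
      sphericalMean u x s = M - (sphereArea n)⁻¹ *
        (∫⁻ ξ, h (s • (ξ : EuclideanSpace ℝ (Fin n))) ∂(sphereMeasure n)).toReal ∧
      ∫⁻ ξ, h (s • (ξ : EuclideanSpace ℝ (Fin n))) ∂(sphereMeasure n) ≠ ∞ := by
    intro s h1 h2
    have hfin : ∫⁻ ξ, h (s • (ξ : EuclideanSpace ℝ (Fin n))) ∂(sphereMeasure n) ≠ ∞ := by
      refine ne_top_of_le_ne_top ?_ (hmain 0 s le_rfl h1 h2)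
      simp only [zero_smul, lintegral_const, h00]
      exact ENNReal.mul_ne_top ENNReal.ofReal_ne_top (measure_ne_top _ _)
    refine ⟨?_, hfin⟩
    have hnn : ∀ ξ : sphere (0 : EuclideanSpace ℝ (Fin n)) 1, 0 ≤ M - u (x + s • (ξ : EuclideanSpace ℝ (Fin n))) :=
      fun ξ => sub_nonneg.2 (hM' _ (ball_subset_closedBall ((hxadd _).1 (hmem s h1 h2 ξ))))
    have hre : ∀ ξ : sphere (0 : EuclideanSpace ℝ (Fin n)) 1, u (x + s • (ξ : EuclideanSpace ℝ (Fin n))) =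
        M - (h (s • (ξ : EuclideanSpace ℝ (Fin n)))).toReal := fun ξ => by
      rw [hval _ (hmem s h1 h2 ξ), ENNReal.toReal_ofReal (hnn ξ)]; ring
    have hmeas : Measurable fun ξ : sphere (0 : EuclideanSpace ℝ (Fin n)) 1 =>
        h (s • (ξ : EuclideanSpace ℝ (Fin n))) := hlsc.measurable.comp (by fun_prop)
    unfold sphericalMean
    simp_rw [hre]
    rw [integral_sub (integrable_const _) (integrable_toReal_of_lintegral_ne_top hmeas.aemeasurable hfin),
      integral_toReal hmeas.aemeasurable (ae_of_all _ fun ξ => by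
        rw [hval _ (hmem s h1 h2 ξ)]; exact ENNReal.ofReal_lt_top), integral_const, smul_eq_mul, mul_sub]
    congr 1
    change (sphereArea n)⁻¹ * (sphereArea n * M) = M
    field_simp
  have hmono : ∀ s t, 0 ≤ s → s ≤ t → t < δ₀ → sphericalMean u x s ≤ sphericalMean u x t := by
    intro s t h1 h2 h3
    rw [(hcomp s h1 (h2.trans_lt h3)).1, (hcomp t (h1.trans h2) h3).1]
    have := ENNReal.toReal_mono (hcomp s h1 (h2.trans_lt h3)).2 (hmain s t h1 h2 h3)
    gcongr
  have hzero : sphericalMean u x 0 = u x := by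
    simp only [sphericalMean, zero_smul, add_zero, integral_const, smul_eq_mul]
    change (sphereArea n)⁻¹ * (sphereArea n * u x) = u x
    field_simp
  refine ⟨fun s h1 h2 => ?_, fun s t h1 h2 h3 => ?_⟩
  · have := hmono 0 s le_rfl h1.le h2
    rw [hzero] at this
    linarith
  · have := hmono s t h1.le h2 h3
    linarith
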